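/- Let m ≡_k A_a b with a > 0 and let (c_i)_{i≤a} be the left expansion sequence for A_a b. Then: (1) if 0 < ℓ < k and 0 < i ≤ a, then A_{a−i}^ℓ(c_{i−1}) is in k-normal form, i.e., A_{a−i}^ℓ(c_{i−1}) ≡_k A_{a−i}(A_{a−i}^{ℓ−1}(c_{i−1})); (2) if i ≤ a and either i > 0 or b > ⟨m⟩₋₁, then c_i is in k-normal form as written in its definition, i.e., c_0 ≡_k A_a(b−1) and, for i > 0, c_i ≡_k A_{a−i}(A_{a−i}^{k−1}(c_{i−1}) − 1). -/

import Mathlib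

/-- The base-`k` Ackermann function `A_a(k, b)`:
`A_0(k, b) = k ^ b` and `A_{a+1}(k, b) = A_a^k(k, A_{a+1}(k, b-1))`,
with the auxiliary value `A_{a+1}(k, -1) = 1`
(equivalently, `A_{a+1}(k, b) = (A_a^k)^[b+1] (1)`). -/
def Ack (k : ℕ) : ℕ → ℕ → ℕ
  | 0, b => k ^ b
  | a + 1, b => ((Ack k a)^[k])^[b + 1] 1

/-- `IsSandwich k m n a b ms` says that `(A_{a i}(k, b i))_{i=1}^n` is a
`k`-sandwiching sequence for `m`, with sandwiching values `(ms i)_{i=0}^n`: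
`ms 0 = 0`; for each `i < n`, `A_{a (i+1)} (ms i) ≤ m < A_{a (i+1) + 1} (ms i)`,
`A_{a (i+1)} (b (i+1)) ≤ m < A_{a (i+1)} (b (i+1) + 1)`, and
`ms (i+1) = A_{a (i+1)} (b (i+1))`; and `A_0 (ms n) > m`. -/
structure IsSandwich (k m n : ℕ) (a b ms : ℕ → ℕ) : Prop where
  ms_zero : ms 0 = 0
  idx_lo : ∀ i < n, Ack k (a (i + 1)) (ms i) ≤ m
  idx_hi : ∀ i < n, m < Ack k (a (i + 1) + 1) (ms i)
  arg_lo : ∀ i < n, Ack k (a (i + 1)) (b (i + 1)) ≤ m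
  arg_hi : ∀ i < n, m < Ack k (a (i + 1)) (b (i + 1) + 1)
  ms_succ : ∀ i < n, ms (i + 1) = Ack k (a (i + 1)) (b (i + 1))
  halt : m < Ack k 0 (ms n)

/-- `NF k m a b c` says that `m ≡_k A_a b + c`, i.e. `m` has `k`-normal form
`A_a b + c` (so `m = A_a b + c` and the `k`-sandwiching sequence of `m` ends
with the pair `(a, b)`). -/
def NF (k m a b c : ℕ) : Prop :=
  m = Ack k a b + c ∧
    ∃ n as bs ms, 1 ≤ n ∧ IsSandwich k m n as bs ms ∧ a = as n ∧ b = bs n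

/-- The left expansion sequence `(c_i)_{i ≤ a}` for `A_a b` (base `k`):
`c_0 = A_a (b - 1)` and `c_i = A_{a-i} (A_{a-i}^{k-1} (c_{i-1}) - 1)` for `i ≥ 1`. -/
def leftExp (k a b : ℕ) : ℕ → ℕ
  | 0 => Ack k a (b - 1)
  | i + 1 => Ack k (a - (i + 1)) ((Ack k (a - (i + 1)))^[k - 1] (leftExp k a b i) - 1)

/-!
Say that `v` has sandwiching index `d` when `A_d x ≤ v < A_{d+1} x` for some sandwiching value `x`
of `v`. If `v` has index `d + 1` and `A_{d+1} y` is the largest value of `A_{d+1}` up to `v`, then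
`A_{d+1} y` is the next sandwiching value, so `v` has index `d` as soon as `A_d (A_{d+1} y) ≤ v`.
Starting from the index `a` of `m`, this shows by induction on `i` that every `v` with
`A_{a-i} c_{i-1} ≤ v < A_{a-i}^k c_{i-1}` has index `a - i`: indeed `c_i = A_{a-i} y`, where
`A_{a-i} (y + 1) = A_{a-i}^k c_{i-1}`, and `A_{a-i-1}^k c_i = A_{a-i} (y + 1)` as
well. A value of `A_d` which has index `d` is in normal form as written.
-/

theorem strictMono_iterate_of_forall_lt {α : Type*} [Preorder α] {f : α → α}
    (hf : ∀ x, x < f x) (x : α) : StrictMono fun n ↦ f^[n] x :=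
  strictMono_nat_of_lt_succ fun n ↦ by
    simpa only [Function.iterate_succ_apply'] using hf (f^[n] x)

section

variable {k m n v x a b c d i l p : ℕ}

namespace Ack

theorem succ_left (k a b : ℕ) : Ack k (a + 1) b = (Ack k a)^[k * (b + 1)] 1 := by
  rw [Ack, Function.iterate_mul]

theorem succ_succ (k a b : ℕ) : Ack k (a + 1) (b + 1) = (Ack k a)^[k] (Ack k (a + 1) b) := by
  simp only [Ack, Function.iterate_succ_apply']

theorem self_lt (hk : 2 ≤ k) (a x : ℕ) : x < Ack k a x := by
  induction a generalizing x with
  | zero => exact Nat.lt_pow_self hk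
  | succ a ih =>
    calc x < x + 1 := x.lt_succ_self
      _ ≤ k * (x + 1) := Nat.le_mul_of_pos_left _ (by lia)
      _ ≤ (Ack k a)^[k * (x + 1)] 1 := (strictMono_iterate_of_forall_lt ih 1).le_apply
      _ = Ack k (a + 1) x := (succ_left k a x).symm

theorem strictMono_iterate (hk : 2 ≤ k) (a x : ℕ) : StrictMono fun n ↦ (Ack k a)^[n] x :=
  strictMono_iterate_of_forall_lt (self_lt hk a) x

theorem strictMono (hk : 2 ≤ k) (a : ℕ) : StrictMono (Ack k a) := by
  cases a with
  | zero => exact pow_right_strictMono₀ hk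
  | succ a =>
    refine strictMono_nat_of_lt_succ fun b ↦ ?_
    simpa only [succ_left] using strictMono_iterate hk a 1 (by gcongr; lia)

theorem one_lt_succ_zero (hk : 2 ≤ k) (a : ℕ) : Ack k a 1 < Ack k (a + 1) 0 := by
  simpa only [succ_left, zero_add, mul_one, Function.iterate_one] using strictMono_iterate hk a 1 hk

theorem iterate_pred (hk : 0 < k) (a c : ℕ) : Ack k a ((Ack k a)^[k - 1] c) = (Ack k a)^[k] c :=
  congrFun (Function.comp_iterate_pred_of_pos _ hk) c

theorem exists_iterate_pred_eq_add_one (hk : 2 ≤ k) (a c : ℕ) :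
    ∃ y, c ≤ y ∧ (Ack k a)^[k - 1] c = y + 1 := by
  have hlt : c < (Ack k a)^[k - 1] c := strictMono_iterate hk a c (by lia : 0 < k - 1)
  exact ⟨(Ack k a)^[k - 1] c - 1, by lia, by lia⟩

end Ack

/-- A single step of a sandwiching sequence for `m`: from the sandwiching value `x` to the
sandwiching value `A_a b`. -/
structure SandwichStep (k m x a b : ℕ) : Prop where
  idx_lo : Ack k a x ≤ m
  idx_hi : m < Ack k (a + 1) x
  arg_lo : Ack k a b ≤ m
  arg_hi : m < Ack k a (b + 1)

theorem SandwichStep.le (hk : 2 ≤ k) (h : SandwichStep k m x a b) : x ≤ b :=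
  Nat.lt_succ_iff.1 <| (Ack.strictMono hk a).lt_iff_lt.1 <| h.idx_lo.trans_lt h.arg_hi

/-- An initial segment of length `n` of a sandwiching sequence for `m`, with the indexing
conventions of `IsSandwich` but without its halting condition. -/
structure IsSandwichChain (k m n : ℕ) (a b ms : ℕ → ℕ) : Prop where
  ms_zero : ms 0 = 0
  step : ∀ i < n, SandwichStep k m (ms i) (a (i + 1)) (b (i + 1))
  ms_succ : ∀ i < n, ms (i + 1) = Ack k (a (i + 1)) (b (i + 1))

theorem IsSandwichChain.isSandwich {a b ms : ℕ → ℕ} (h : IsSandwichChain k m n a b ms)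
    (halt : m < Ack k 0 (ms n)) : IsSandwich k m n a b ms where
  ms_zero := h.ms_zero
  idx_lo i hi := (h.step i hi).idx_lo
  idx_hi i hi := (h.step i hi).idx_hi
  arg_lo i hi := (h.step i hi).arg_lo
  arg_hi i hi := (h.step i hi).arg_hi
  ms_succ := h.ms_succ
  halt := halt

theorem IsSandwichChain.extend {as bs ms : ℕ → ℕ} (h : IsSandwichChain k m n as bs ms)
    (hstep : SandwichStep k m (ms n) a b) :
    IsSandwichChain k m (n + 1) (Function.update as (n + 1) a) (Function.update bs (n + 1) b)
      (Function.update ms (n + 1) (Ack k a b)) where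
  ms_zero := by simpa using h.ms_zero
  step i hi := by
    rcases Nat.lt_succ_iff_lt_or_eq.1 hi with hlt | rfl
    · simpa [hlt.ne, hi.ne] using h.step i hlt
    · simpa using hstep
  ms_succ i hi := by
    rcases Nat.lt_succ_iff_lt_or_eq.1 hi with hlt | rfl
    · simpa [hlt.ne] using h.ms_succ i hlt
    · simp

/-- `IsSandwichingValue k m x` says that `x` is one of the sandwiching values of `m`, i.e. can be
reached from `0` by sandwiching steps for `m`. -/
inductive IsSandwichingValue (k m : ℕ) : ℕ → Prop
  | zero : IsSandwichingValue k m 0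
  | step {x a b : ℕ} : IsSandwichingValue k m x → SandwichStep k m x a b →
      IsSandwichingValue k m (Ack k a b)

theorem IsSandwich.isSandwichingValue {a b ms : ℕ → ℕ} (h : IsSandwich k m n a b ms)
    (hi : i ≤ n) : IsSandwichingValue k m (ms i) := by
  induction i with
  | zero => simpa only [h.ms_zero] using IsSandwichingValue.zero
  | succ i ih =>
    rw [h.ms_succ i hi]
    exact (ih (by lia)).step ⟨h.idx_lo i hi, h.idx_hi i hi, h.arg_lo i hi, h.arg_hi i hi⟩

theorem IsSandwichingValue.exists_isSandwichChain (h : IsSandwichingValue k m x) :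
    ∃ n as bs ms, IsSandwichChain k m n as bs ms ∧ ms n = x := by
  induction h with
  | zero => exact ⟨0, 0, 0, 0, ⟨rfl, by simp, by simp⟩, rfl⟩
  | step _ hstep ih =>
    obtain ⟨n, as, bs, ms, hchain, rfl⟩ := ih
    exact ⟨n + 1, _, _, _, hchain.extend hstep, by simp⟩

theorem IsSandwichingValue.of_le (hk : 2 ≤ k) (h : IsSandwichingValue k m x) (hvm : v ≤ m)
    (hxv : x ≤ v) : IsSandwichingValue k v x := by
  induction h with
  | zero => exact .zero
  | @step x a b _ hstep ih =>
    have hlo : Ack k a x ≤ v := ((Ack.strictMono hk a).monotone (hstep.le hk)).trans hxv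
    exact (ih ((Ack.self_lt hk a x).le.trans hlo)).step
      ⟨hlo, hvm.trans_lt hstep.idx_hi, hxv, hvm.trans_lt hstep.arg_hi⟩

/-- `HasSandwichingIndex k v d` says that `d` is the index of the sandwiching step for `v` out of
some sandwiching value `x`. -/
def HasSandwichingIndex (k v d : ℕ) : Prop :=
  ∃ x, IsSandwichingValue k v x ∧ Ack k d x ≤ v ∧ v < Ack k (d + 1) x

theorem IsSandwichingValue.hasSandwichingIndex (hk : 2 ≤ k) (h : IsSandwichingValue k m x)
    (hvm : v ≤ m) (hlo : Ack k d x ≤ v) (hhi : v < Ack k (d + 1) x) :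
    HasSandwichingIndex k v d :=
  ⟨x, h.of_le hk hvm ((Ack.self_lt hk d x).le.trans hlo), hlo, hhi⟩

namespace HasSandwichingIndex

theorem nf_add (h : HasSandwichingIndex k (Ack k a b + c) a)
    (hhi : Ack k a b + c < Ack k a (b + 1)) (halt : Ack k a b + c < Ack k 0 (Ack k a b)) :
    NF k (Ack k a b + c) a b c := by
  obtain ⟨x, hx, hlo, hlt⟩ := h
  obtain ⟨n, as, bs, ms, hchain, rfl⟩ := hx.exists_isSandwichChain
  have hext := hchain.extend ⟨hlo, hlt, Nat.le_add_right _ _, hhi⟩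
  exact ⟨rfl, n + 1, _, _, _, by lia, hext.isSandwich (by simpa using halt), by simp, by simp⟩

theorem nf (hk : 2 ≤ k) (h : HasSandwichingIndex k (Ack k a b) a) : NF k (Ack k a b) a b 0 :=
  nf_add (c := 0) h (Ack.strictMono hk a b.lt_succ_self) (Ack.self_lt hk 0 _)

theorem of_succ (hk : 2 ≤ k) (h : HasSandwichingIndex k v (d + 1))
    (hlo : Ack k d (Ack k (d + 1) b) ≤ v) (hhi : v < Ack k (d + 1) (b + 1)) :
    HasSandwichingIndex k v d := by
  obtain ⟨x, hx, hxlo, hxhi⟩ := h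
  have hstep : SandwichStep k v x (d + 1) b :=
    ⟨hxlo, hxhi, (Ack.self_lt hk d _).le.trans hlo, hhi⟩
  exact ⟨_, hx.step hstep, hlo, hhi.trans_le <|
    (Ack.strictMono hk (d + 1)).monotone (Ack.self_lt hk (d + 1) b)⟩

theorem of_mem_Ico_ack_pred (hk : 2 ≤ k) (h : HasSandwichingIndex k (Ack k (d + 1) b) (d + 1))
    (hv : v ∈ Set.Ico (Ack k d (Ack k (d + 1) (b - 1)))
      ((Ack k d)^[k] (Ack k (d + 1) (b - 1)))) :
    HasSandwichingIndex k v d := by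
  obtain ⟨p, hp, hplo, hphi⟩ := h
  obtain ⟨hlo, hhi⟩ := hv
  rw [← Ack.succ_succ] at hhi
  have hpb : p ≤ b := (Ack.strictMono hk (d + 1)).le_iff_le.1 hplo
  have hle : Ack k (d + 1) (b - 1) ≤ v := (Ack.self_lt hk d _).le.trans hlo
  rcases b with _ | b
  -- Since `0 - 1 = 0`, the range is that of `A_{d+1} 1`, whose sandwiching starts at `0`.
  · exact of_succ hk ⟨0, .zero, hle, hhi.trans (Ack.one_lt_succ_zero hk (d + 1))⟩ hlo hhi
  rw [Nat.add_sub_cancel] at hlo hhi hle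
  rcases hpb.lt_or_eq with hlt | rfl
  · have hplo' : Ack k (d + 1) p ≤ v :=
      ((Ack.strictMono hk (d + 1)).monotone (Nat.lt_succ_iff.1 hlt)).trans hle
    exact of_succ hk (hp.hasSandwichingIndex hk hhi.le hplo' (hhi.trans hphi)) hlo hhi
  · have hplo' : Ack k d (b + 1) ≤ v :=
      ((Ack.strictMono hk d).monotone (Ack.self_lt hk (d + 1) b)).trans hlo
    exact hp.hasSandwichingIndex hk hhi.le hplo' hhi

theorem of_mem_Ico_leftExp (hk : 2 ≤ k) (h : HasSandwichingIndex k (Ack k a b) a)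
    (hd : d + (i + 1) = a)
    (hv : v ∈ Set.Ico (Ack k d (leftExp k a b i)) ((Ack k d)^[k] (leftExp k a b i))) :
    HasSandwichingIndex k v d := by
  induction i generalizing d with
  | zero => subst hd; exact h.of_mem_Ico_ack_pred hk hv
  | succ i ih =>
    obtain ⟨y, hcy, hy⟩ := Ack.exists_iterate_pred_eq_add_one hk (d + 1) (leftExp k a b i)
    have hc : leftExp k a b (i + 1) = Ack k (d + 1) y := by
      rw [leftExp, show a - (i + 1) = d + 1 by lia, hy, Nat.add_sub_cancel]
    rw [hc, ← Ack.succ_succ] at hv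
    have hlo : Ack k (d + 1) (leftExp k a b i) ≤ v :=
      ((Ack.strictMono hk (d + 1)).monotone hcy).trans <| (Ack.self_lt hk d _).le.trans hv.1
    have hhi : v < (Ack k (d + 1))^[k] (leftExp k a b i) := by
      simpa only [← Ack.iterate_pred (by lia : 0 < k), hy] using hv.2
    exact (ih (by lia) ⟨hlo, hhi⟩).of_succ hk hv.1 hv.2

theorem nf_iterate_leftExp (hk : 2 ≤ k) (h : HasSandwichingIndex k (Ack k a b) a)
    (hd : d + (i + 1) = a) (hl : l + 1 < k) :
    NF k ((Ack k d)^[l + 1] (leftExp k a b i)) d ((Ack k d)^[l] (leftExp k a b i)) 0 := by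
  have hmono := Ack.strictMono_iterate hk d (leftExp k a b i)
  have hindex := h.of_mem_Ico_leftExp hk hd ⟨hmono.monotone (Nat.le_add_left 1 l), hmono hl⟩
  rw [Function.iterate_succ_apply'] at hindex ⊢
  exact hindex.nf hk

theorem nf_leftExp_succ (hk : 2 ≤ k) (h : HasSandwichingIndex k (Ack k a b) a)
    (hd : d + (i + 1) = a) :
    NF k (leftExp k a b (i + 1)) d ((Ack k d)^[k - 1] (leftExp k a b i) - 1) 0 := by
  obtain ⟨y, hcy, hy⟩ := Ack.exists_iterate_pred_eq_add_one hk d (leftExp k a b i)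
  have hhi : Ack k d y < (Ack k d)^[k] (leftExp k a b i) := by
    rw [← Ack.iterate_pred (by lia : 0 < k), hy]
    exact Ack.strictMono hk d y.lt_succ_self
  rw [leftExp, show a - (i + 1) = d by lia, hy, Nat.add_sub_cancel]
  exact (h.of_mem_Ico_leftExp hk hd ⟨(Ack.strictMono hk d).monotone hcy, hhi⟩).nf hk

end HasSandwichingIndex

theorem IsSandwichingValue.nf_ack_pred (hk : 2 ≤ k) (h : IsSandwichingValue k (Ack k a b) p)
    (hhi : Ack k a b < Ack k (a + 1) p) (hpb : p < b) :
    NF k (Ack k a (b - 1)) a (b - 1) 0 := by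
  have hlt : Ack k a (b - 1) < Ack k a b := Ack.strictMono hk a (by lia)
  have hlo : Ack k a p ≤ Ack k a (b - 1) := (Ack.strictMono hk a).monotone (by lia)
  exact (h.hasSandwichingIndex hk hlt.le hlo (hlt.trans hhi)).nf hk

end

theorem stmt_14 (k m a b n : ℕ) (aseq bseq ms : ℕ → ℕ) (hk : 2 ≤ k) (ha : 0 < a)
    (hn : 1 ≤ n) (hs : IsSandwich k m n aseq bseq ms) (hm : m = Ack k a b)
    (han : aseq n = a) (hbn : bseq n = b) :
    (∀ l i, 0 < l → l < k → 0 < i → i ≤ a →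
      NF k ((Ack k (a - i))^[l] (leftExp k a b (i - 1))) (a - i)
        ((Ack k (a - i))^[l - 1] (leftExp k a b (i - 1))) 0) ∧
    (ms (n - 1) < b → NF k (leftExp k a b 0) a (b - 1) 0) ∧
    (∀ i, 0 < i → i ≤ a →
      NF k (leftExp k a b i) (a - i)
        ((Ack k (a - i))^[k - 1] (leftExp k a b (i - 1)) - 1) 0) := by
  subst hm
  obtain ⟨n, rfl⟩ := Nat.exists_eq_add_of_le' hn
  have hvalue := hs.isSandwichingValue (Nat.le_add_right n 1)
  have hlo := han ▸ hs.idx_lo n n.lt_succ_self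
  have hhi := han ▸ hs.idx_hi n n.lt_succ_self
  have hindex : HasSandwichingIndex k (Ack k a b) a := ⟨ms n, hvalue, hlo, hhi⟩
  refine ⟨fun l i hl hlk hi hia ↦ ?_, hvalue.nf_ack_pred hk hhi, fun i hi hia ↦ ?_⟩
  · obtain ⟨l, rfl⟩ := Nat.exists_eq_add_of_le' hl
    obtain ⟨i, rfl⟩ := Nat.exists_eq_add_of_le' hi
    exact hindex.nf_iterate_leftExp hk (Nat.sub_add_cancel hia) hlk
  · obtain ⟨i, rfl⟩ := Nat.exists_eq_add_of_le' hi
    exact hindex.nf_leftExp_succ hk (Nat.sub_add_cancel hia)
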